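/- Define ψ_3^2 := i Σ_{q+1≤k≤n, 1≤j,s≤q} c_{e_k, e_j+e_s} [|λ_j||λ_s|/(|λ_k|+|λ_j|+|λ_s|)]·(1/(|λ_j|+|λ_k|) + 1/(|λ_k|+|λ_s|)) z̄_k w_j w_s − i Σ_{1≤k≤q, q+1≤j,s≤n} c_{e_j+e_s, e_k} [|λ_j||λ_s|/(|λ_k|+|λ_j|+|λ_s|)]·(1/(|λ_j|+|λ_k|) + 1/(|λ_k|+|λ_s|)) z_k w̄_j w̄_s + i Σ_{q+1≤s,k≤n, 1≤j≤q} c_{e_s+e_k, e_j} [2|λ_j||λ_k|/((|λ_s|+|λ_j|)(|λ_s|+|λ_j|+|λ_k|))] z̄_s w̄_k w_j − i Σ_{q+1≤k≤n, 1≤j,s≤q} c_{e_k, e_s+e_j} [2|λ_j||λ_k|/((|λ_s|+|λ_k|)(|λ_s|+|λ_j|+|λ_k|))] z_s w̄_k w_j, where e_j denotes the j-th standard unit multiindex. Then T ψ_3^2 = Σ_{j=1}^q 2i|λ_j| w_j ∂ψ_3^1/∂z_j + Σ_{j=q+1}^n 2i|λ_j| w̄_j ∂ψ_3^1/∂z̄_j.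 -/

import Mathlib

/-!
Statement 0: the action of the derivation
`T = Σ_{j≤q} 2i|λ_j| z_j ∂/∂z_j + Σ_{j>q} 2i|λ_j| z̄_j ∂/∂z̄_j`
on the polynomial ring over ℂ in the 4n formal variables
`z_1,…,z_n, z̄_1,…,z̄_n, w_1,…,w_n, w̄_1,…,w̄_n`, at the level of coefficients.
We encode the variables as `Fin 4 × Fin n`, where `(0,j) = z_j`, `(1,j) = z̄_j`,
`(2,j) = w_j`, `(3,j) = w̄_j`.
-/

open MvPolynomial

attribute [local instance] Classical.propDecidable

noncomputable section

abbrev Var (n : ℕ) := Fin 4 × Fin n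

def zV {n : ℕ} (j : Fin n) : Var n := (0, j)
def zbV {n : ℕ} (j : Fin n) : Var n := (1, j)
def wV {n : ℕ} (j : Fin n) : Var n := (2, j)
def wbV {n : ℕ} (j : Fin n) : Var n := (3, j)

/-- The derivation `T = Σ_{1≤j≤q} 2i|λ_j| z_j ∂/∂z_j + Σ_{q+1≤j≤n} 2i|λ_j| z̄_j ∂/∂z̄_j`. -/
def Tder {n : ℕ} (q : ℕ) (lam : Fin n → ℝ) (g : MvPolynomial (Var n) ℂ) :
    MvPolynomial (Var n) ℂ :=
  ∑ j : Fin n,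
    if (j : ℕ) < q then
      C (2 * Complex.I * ((|lam j| : ℝ) : ℂ)) * X (zV j) * pderiv (zV j) g
    else
      C (2 * Complex.I * ((|lam j| : ℝ) : ℂ)) * X (zbV j) * pderiv (zbV j) g

/-- The exponent function of the monomial `z̄^α z^β w̄^γ w^δ`. -/
def mIdx {n : ℕ} (α β γ δ : Fin n → ℕ) : Var n →₀ ℕ :=
  Finsupp.equivFunOnFinite.symm fun v =>
    if v.1 = 0 then β v.2
    else if v.1 = 1 then α v.2
    else if v.1 = 2 then δ v.2
    else γ v.2

/-- The condition `(α'', β') = (0,0)`. -/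
def cond0 {n : ℕ} (q : ℕ) (α β : Fin n → ℕ) : Prop :=
  ∀ j : Fin n, (q ≤ (j : ℕ) → α j = 0) ∧ ((j : ℕ) < q → β j = 0)

/-- `⟨|λ''|, α''⟩ + ⟨|λ'|, β'⟩`. -/
def wgt {n : ℕ} (q : ℕ) (lam : Fin n → ℝ) (α β : Fin n → ℕ) : ℝ :=
  ∑ j : Fin n, if (j : ℕ) < q then |lam j| * β j else |lam j| * α j

/-- `⟨|λ''|, α''⟩`. -/
def wA {n : ℕ} (q : ℕ) (lam : Fin n → ℝ) (α : Fin n → ℕ) : ℝ :=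
  ∑ j : Fin n, if q ≤ (j : ℕ) then |lam j| * α j else 0

/-- `⟨|λ'|, β'⟩`. -/
def wB {n : ℕ} (q : ℕ) (lam : Fin n → ℝ) (β : Fin n → ℕ) : ℝ :=
  ∑ j : Fin n, if (j : ℕ) < q then |lam j| * β j else 0

/-- `α! = α_1! ⋯ α_n!`. -/
def factM {n : ℕ} (α : Fin n → ℕ) : ℕ := ∏ j : Fin n, (α j).factorial

/-- The `j`-th standard unit multiindex. -/
def eIdx {n : ℕ} (j : Fin n) : Fin n → ℕ := fun t => if t = j then 1 else 0

/-- The polynomial `ψ₃²` of Statement 4 (an explicit finite sum). -/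
def psi32 {n : ℕ} (q : ℕ) (lam : Fin n → ℝ) (c : (Fin n → ℕ) → (Fin n → ℕ) → ℂ) :
    MvPolynomial (Var n) ℂ :=
  C Complex.I *
    (∑ k : Fin n, ∑ j : Fin n, ∑ s : Fin n,
      if q ≤ (k : ℕ) ∧ (j : ℕ) < q ∧ (s : ℕ) < q then
        C (c (eIdx k) (fun t => eIdx j t + eIdx s t)) *
        C (((|lam j| * |lam s| / (|lam k| + |lam j| + |lam s|)) *
            (1 / (|lam j| + |lam k|) + 1 / (|lam k| + |lam s|)) : ℝ) : ℂ) *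
        (X (zbV k) * X (wV j) * X (wV s))
      else 0)
  - C Complex.I *
    (∑ k : Fin n, ∑ j : Fin n, ∑ s : Fin n,
      if (k : ℕ) < q ∧ q ≤ (j : ℕ) ∧ q ≤ (s : ℕ) then
        C (c (fun t => eIdx j t + eIdx s t) (eIdx k)) *
        C (((|lam j| * |lam s| / (|lam k| + |lam j| + |lam s|)) *
            (1 / (|lam j| + |lam k|) + 1 / (|lam k| + |lam s|)) : ℝ) : ℂ) *
        (X (zV k) * X (wbV j) * X (wbV s))
      else 0)
  + C Complex.I *
    (∑ s : Fin n, ∑ k : Fin n, ∑ j : Fin n,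
      if q ≤ (s : ℕ) ∧ q ≤ (k : ℕ) ∧ (j : ℕ) < q then
        C (c (fun t => eIdx s t + eIdx k t) (eIdx j)) *
        C ((2 * |lam j| * |lam k| /
            ((|lam s| + |lam j|) * (|lam s| + |lam j| + |lam k|)) : ℝ) : ℂ) *
        (X (zbV s) * X (wbV k) * X (wV j))
      else 0)
  - C Complex.I *
    (∑ k : Fin n, ∑ j : Fin n, ∑ s : Fin n,
      if q ≤ (k : ℕ) ∧ (j : ℕ) < q ∧ (s : ℕ) < q then
        C (c (eIdx k) (fun t => eIdx s t + eIdx j t)) *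
        C ((2 * |lam j| * |lam k| /
            ((|lam s| + |lam k|) * (|lam s| + |lam j| + |lam k|)) : ℝ) : ℂ) *
        (X (zV s) * X (wbV k) * X (wV j))
      else 0)

lemma mIdx_z {n : ℕ} (α β γ δ : Fin n → ℕ) (t : Fin n) : mIdx α β γ δ (zV t) = β t := by
  simp [mIdx, zV]
lemma mIdx_zb {n : ℕ} (α β γ δ : Fin n → ℕ) (t : Fin n) : mIdx α β γ δ (zbV t) = α t := by
  simp [mIdx, zbV]
lemma mIdx_w {n : ℕ} (α β γ δ : Fin n → ℕ) (t : Fin n) : mIdx α β γ δ (wV t) = δ t := by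
  simp [mIdx, wV]
lemma mIdx_wb {n : ℕ} (α β γ δ : Fin n → ℕ) (t : Fin n) : mIdx α β γ δ (wbV t) = γ t := by
  simp [mIdx, wbV]

lemma var_ext {n : ℕ} {d e : Var n →₀ ℕ} (h0 : ∀ t, d (zV t) = e (zV t))
    (h1 : ∀ t, d (zbV t) = e (zbV t)) (h2 : ∀ t, d (wV t) = e (wV t))
    (h3 : ∀ t, d (wbV t) = e (wbV t)) : d = e := by
  ext ⟨a, t⟩
  fin_cases a
  · exact h0 t
  · exact h1 t
  · exact h2 t
  · exact h3 t

lemma sng {n : ℕ} (a b : Fin 4) (s t : Fin n) :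
    (Finsupp.single ((a, s) : Var n) 1 : Var n →₀ ℕ) (b, t) = if a = b then eIdx s t else 0 := by
  rw [Finsupp.single_apply, eIdx]
  by_cases h : a = b <;> by_cases h' : s = t <;> (simp [h, h', Prod.ext_iff]; try grind)

lemma mIdx_add_z {n : ℕ} (α β γ δ : Fin n → ℕ) (s : Fin n) :
    mIdx α β γ δ + Finsupp.single (zV s) 1 = mIdx α (fun t => β t + eIdx s t) γ δ := by
  apply var_ext <;> intro t <;> rw [Finsupp.add_apply] <;>
    simp [mIdx_z, mIdx_zb, mIdx_w, mIdx_wb] <;> simp [zV, zbV, wV, wbV, sng]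
lemma mIdx_add_zb {n : ℕ} (α β γ δ : Fin n → ℕ) (s : Fin n) :
    mIdx α β γ δ + Finsupp.single (zbV s) 1 = mIdx (fun t => α t + eIdx s t) β γ δ := by
  apply var_ext <;> intro t <;> rw [Finsupp.add_apply] <;>
    simp [mIdx_z, mIdx_zb, mIdx_w, mIdx_wb] <;> simp [zV, zbV, wV, wbV, sng]

lemma mIdx_self {n : ℕ} (d : Var n →₀ ℕ) :
    mIdx (fun t => d (zbV t)) (fun t => d (zV t)) (fun t => d (wbV t)) (fun t => d (wV t)) = d := by
  apply var_ext <;> intro t <;> simp [mIdx_z, mIdx_zb, mIdx_w, mIdx_wb]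

lemma coeff_pd {n : ℕ} (v : Var n) (d : Var n →₀ ℕ) (p : MvPolynomial (Var n) ℂ) :
    coeff d (pderiv v p) = coeff (d + Finsupp.single v 1) p * ((d v : ℂ) + 1) := by
  induction p using MvPolynomial.induction_on' with
  | monomial m a =>
    rw [pderiv_monomial, coeff_monomial, coeff_monomial]
    by_cases h : m = d + Finsupp.single v 1
    · subst h
      simp
    · rw [if_neg h, zero_mul]
      by_cases h2 : m - Finsupp.single v 1 = d
      · rw [if_pos h2]
        have : m v = 0 := by
          by_contra h3
          apply h
          rw [← h2, tsub_add_cancel_of_le]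
          simpa using Nat.one_le_iff_ne_zero.2 h3
        simp [this]
      · rw [if_neg h2]
  | add p r hp hr => simp only [map_add, coeff_add, hp, hr, add_mul]

lemma sum_eIdx {n : ℕ} (k : Fin n) : ∑ t, eIdx k t = 1 := by simp [eIdx]

lemma eq_eIdx {n : ℕ} (f : Fin n → ℕ) (h : ∑ t, f t = 1) : ∃ k, f = eIdx k := by
  obtain ⟨k, -, hk⟩ : ∃ k ∈ Finset.univ, f k ≠ 0 := by
    by_contra! h'
    rw [Finset.sum_eq_zero h'] at h
    omega
  have h2 := Finset.add_sum_erase Finset.univ f (Finset.mem_univ k)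
  rw [h] at h2
  have h3 : ∑ x ∈ Finset.univ.erase k, f x = 0 := by omega
  have h4 : f k = 1 := by omega
  refine ⟨k, funext fun t => ?_⟩
  by_cases ht : t = k
  · subst ht; simp [eIdx, h4]
  · simp only [eIdx, ht, if_false]
    exact (Finset.sum_eq_zero_iff.1 h3) t (by simp [ht])

lemma eIdx_inj {n : ℕ} {j k : Fin n} (h : eIdx j = eIdx k) : j = k := by
  have := congrFun h j
  by_contra hh
  simp [eIdx, hh] at this

lemma eIdx_ne {n : ℕ} (j : Fin n) : eIdx j ≠ 0 := by
  intro h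
  have := congrFun h j
  simp [eIdx] at this

lemma factM_e {n : ℕ} (k : Fin n) : factM (eIdx k) = 1 := by
  unfold factM
  apply Finset.prod_eq_one
  intro t _
  unfold eIdx
  split_ifs <;> rfl

lemma factM_0 {n : ℕ} : factM (0 : Fin n → ℕ) = 1 := by simp [factM]

lemma factM_ee {n : ℕ} (k s : Fin n) : factM (fun t => eIdx k t + eIdx s t) = eIdx k s + 1 := by
  unfold factM
  rw [Finset.prod_eq_single s]
  · by_cases h : s = k <;> simp [eIdx, h]
  · intro t _ ht
    by_cases h : t = k
    · subst h
      simp [eIdx, ht]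
    · simp [eIdx, ht, h]
  · simp

def gg {n : ℕ} (q : ℕ) (j : Fin n) : Fin n → ℕ := if (j : ℕ) < q then 0 else eIdx j
def dd {n : ℕ} (q : ℕ) (j : Fin n) : Fin n → ℕ := if (j : ℕ) < q then eIdx j else 0
def WW {n : ℕ} (q : ℕ) (j : Fin n) : Var n := if (j : ℕ) < q then wV j else wbV j

lemma gd_inj {n q : ℕ} {j k : Fin n} (h1 : gg q j = gg q k) (h2 : dd q j = dd q k) : j = k := by
  unfold gg at h1
  unfold dd at h2
  by_cases h : (j : ℕ) < q <;> by_cases h' : (k : ℕ) < q <;> simp [h, h'] at h1 h2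
  · exact eIdx_inj h2
  · exact absurd h2 (eIdx_ne j)
  · exact absurd h1 (eIdx_ne j)
  · exact eIdx_inj h1

lemma mon_z {n : ℕ} (q : ℕ) (k j : Fin n) (a : ℂ) :
    monomial (mIdx 0 (eIdx k) (gg q j) (dd q j)) a = C a * (X (zV k) * X (WW q j)) := by
  have : mIdx 0 (eIdx k) (gg q j) (dd q j)
      = Finsupp.single (zV k) 1 + Finsupp.single (WW q j) 1 := by
    by_cases h : (j : ℕ) < q <;>
    apply var_ext <;> intro t <;> rw [Finsupp.add_apply] <;>
    simp [mIdx_z, mIdx_zb, mIdx_w, mIdx_wb, gg, dd, WW, h] <;> simp [zV, zbV, wV, wbV, sng]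
  rw [this, X, X, monomial_mul, C_mul_monomial]
  simp

lemma mon_zb {n : ℕ} (q : ℕ) (k j : Fin n) (a : ℂ) :
    monomial (mIdx (eIdx k) 0 (gg q j) (dd q j)) a = C a * (X (zbV k) * X (WW q j)) := by
  have : mIdx (eIdx k) 0 (gg q j) (dd q j)
      = Finsupp.single (zbV k) 1 + Finsupp.single (WW q j) 1 := by
    by_cases h : (j : ℕ) < q <;>
    apply var_ext <;> intro t <;> rw [Finsupp.add_apply] <;>
    simp [mIdx_z, mIdx_zb, mIdx_w, mIdx_wb, gg, dd, WW, h] <;> simp [zV, zbV, wV, wbV, sng]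
  rw [this, X, X, monomial_mul, C_mul_monomial]
  simp

lemma mIdx_inj {n : ℕ} {α β γ δ α' β' γ' δ' : Fin n → ℕ}
    (h : mIdx α β γ δ = mIdx α' β' γ' δ') : α = α' ∧ β = β' ∧ γ = γ' ∧ δ = δ' := by
  refine ⟨?_, ?_, ?_, ?_⟩ <;> funext t
  · rw [← mIdx_zb α β γ δ, h, mIdx_zb]
  · rw [← mIdx_z α β γ δ, h, mIdx_z]
  · rw [← mIdx_wb α β γ δ, h, mIdx_wb]
  · rw [← mIdx_w α β γ δ, h, mIdx_w]

def MM {n : ℕ} (q : ℕ) : Bool × Fin n × Fin n → (Var n →₀ ℕ)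
  | (true, k, j) => mIdx 0 (eIdx k) (gg q j) (dd q j)
  | (false, k, j) => mIdx (eIdx k) 0 (gg q j) (dd q j)

lemma MM_inj {n : ℕ} (q : ℕ) : Function.Injective (MM (n := n) q) := by
  rintro ⟨a, k, j⟩ ⟨a', k', j'⟩ h
  cases a <;> cases a' <;> obtain ⟨h1, h2, h3, h4⟩ := mIdx_inj h
  · rw [gd_inj h3 h4, eIdx_inj h1]
  · exact absurd h1 (eIdx_ne k)
  · exact absurd h2 (eIdx_ne k)
  · rw [gd_inj h3 h4, eIdx_inj h2]

lemma expand {n : ℕ} (q : ℕ) (Q : MvPolynomial (Var n) ℂ)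
    (h : ∀ d, coeff d Q ≠ 0 → ∃ i, MM q i = d) :
    Q = ∑ k : Fin n, ∑ j : Fin n,
      (C (coeff (mIdx 0 (eIdx k) (gg q j) (dd q j)) Q) * (X (zV k) * X (WW q j))
      + C (coeff (mIdx (eIdx k) 0 (gg q j) (dd q j)) Q) * (X (zbV k) * X (WW q j))) := by
  have h1 : Q = ∑ i : Bool × Fin n × Fin n, monomial (MM q i) (coeff (MM q i) Q) := by
    ext d
    rw [coeff_sum]
    simp only [coeff_monomial]
    by_cases hd : ∃ i, MM q i = d
    · obtain ⟨i, rfl⟩ := hd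
      simp [(MM_inj q).eq_iff]
    · have : coeff d Q = 0 := by
        by_contra h0
        exact hd (h d h0)
      rw [this, Finset.sum_eq_zero]
      intro i _
      rw [if_neg fun hi => hd ⟨i, hi⟩]
  conv_lhs => rw [h1]
  rw [Fintype.sum_prod_type, Fintype.sum_bool, Fintype.sum_prod_type, Fintype.sum_prod_type,
    ← Finset.sum_add_distrib]
  refine Finset.sum_congr rfl fun k _ => ?_
  rw [← Finset.sum_add_distrib]
  refine Finset.sum_congr rfl fun j _ => ?_
  rw [← mon_z, ← mon_zb]
  rfl

lemma supp {n q : ℕ} (d : Var n →₀ ℕ) (h : (∑ t, d (zbV t)) + ∑ t, d (zV t) = 1)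
    (hw : (∃ j : Fin n, (j : ℕ) < q ∧ (fun t => d (wbV t)) = 0 ∧ (fun t => d (wV t)) = eIdx j) ∨
      (∃ j : Fin n, q ≤ (j : ℕ) ∧ (fun t => d (wV t)) = 0 ∧ (fun t => d (wbV t)) = eIdx j)) :
    ∃ i, MM q i = d := by
  obtain ⟨j, hj1, hj2⟩ : ∃ j : Fin n, (fun t => d (wbV t)) = gg q j ∧
      (fun t => d (wV t)) = dd q j := by
    rcases hw with ⟨j, h1, h2, h3⟩ | ⟨j, h1, h2, h3⟩
    · exact ⟨j, by simp [gg, h1, h2], by simp [dd, h1, h3]⟩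
    · exact ⟨j, by simp [gg, not_lt.2 h1, h3], by simp [dd, not_lt.2 h1, h2]⟩
  have h0 : (∑ t, d (zbV t) = 1 ∧ ∑ t, d (zV t) = 0) ∨ (∑ t, d (zbV t) = 0 ∧ ∑ t, d (zV t) = 1) := by
    omega
  rcases h0 with ⟨h1, h2⟩ | ⟨h1, h2⟩
  · obtain ⟨k, hk⟩ := eq_eIdx _ h1
    have h3 : (fun t => d (zV t)) = 0 := by
      funext t
      exact Finset.sum_eq_zero_iff.1 h2 t (Finset.mem_univ t)
    refine ⟨(false, k, j), ?_⟩
    rw [← mIdx_self d, hj1, hj2, h3, hk]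
    rfl
  · obtain ⟨k, hk⟩ := eq_eIdx _ h2
    have h3 : (fun t => d (zbV t)) = 0 := by
      funext t
      exact Finset.sum_eq_zero_iff.1 h1 t (Finset.mem_univ t)
    refine ⟨(true, k, j), ?_⟩
    rw [← mIdx_self d, hj1, hj2, h3, hk]
    rfl

lemma supp_z {n q : ℕ} (ψ : MvPolynomial (Var n) ℂ) (hψ1c : ∀ α β γ δ : Fin n → ℕ,
      ¬ ((∑ t, α t) + (∑ t, β t) = 2 ∧
          ((∃ j : Fin n, (j : ℕ) < q ∧ γ = 0 ∧ δ = eIdx j) ∨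
           (∃ j : Fin n, q ≤ (j : ℕ) ∧ δ = 0 ∧ γ = eIdx j))) →
      coeff (mIdx α β γ δ) ψ = 0) (s : Fin n) (d : Var n →₀ ℕ)
    (hd : coeff d (pderiv (zV s) ψ) ≠ 0) : ∃ i, MM q i = d := by
  rw [coeff_pd] at hd
  have h1 := left_ne_zero_of_mul hd
  rw [← mIdx_self d, mIdx_add_z] at h1
  have h2 := not_imp_comm.1 (hψ1c _ _ _ _) h1
  obtain ⟨h3, h4⟩ := h2
  rw [Finset.sum_add_distrib, sum_eIdx] at h3
  exact supp d (by omega) h4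

lemma supp_zb {n q : ℕ} (ψ : MvPolynomial (Var n) ℂ) (hψ1c : ∀ α β γ δ : Fin n → ℕ,
      ¬ ((∑ t, α t) + (∑ t, β t) = 2 ∧
          ((∃ j : Fin n, (j : ℕ) < q ∧ γ = 0 ∧ δ = eIdx j) ∨
           (∃ j : Fin n, q ≤ (j : ℕ) ∧ δ = 0 ∧ γ = eIdx j))) →
      coeff (mIdx α β γ δ) ψ = 0) (s : Fin n) (d : Var n →₀ ℕ)
    (hd : coeff d (pderiv (zbV s) ψ) ≠ 0) : ∃ i, MM q i = d := by
  rw [coeff_pd] at hd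
  have h1 := left_ne_zero_of_mul hd
  rw [← mIdx_self d, mIdx_add_zb] at h1
  have h2 := not_imp_comm.1 (hψ1c _ _ _ _) h1
  obtain ⟨h3, h4⟩ := h2
  rw [Finset.sum_add_distrib, sum_eIdx] at h3
  exact supp d (by omega) h4

def TD {n : ℕ} (q : ℕ) (lam : Fin n → ℝ) :
    Derivation ℂ (MvPolynomial (Var n) ℂ) (MvPolynomial (Var n) ℂ) :=
  ∑ j : Fin n,
    if (j : ℕ) < q then
      (C (2 * Complex.I * ((|lam j| : ℝ) : ℂ)) * X (zV j)) • pderiv (zV j)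
    else
      (C (2 * Complex.I * ((|lam j| : ℝ) : ℂ)) * X (zbV j)) • pderiv (zbV j)

lemma Tder_eq {n : ℕ} (q : ℕ) (lam : Fin n → ℝ) (g : MvPolynomial (Var n) ℂ) :
    Tder q lam g = TD q lam g := by
  unfold Tder TD
  rw [← Derivation.coeFnAddMonoidHom_apply, map_sum, Finset.sum_apply]
  refine Finset.sum_congr rfl fun j _ => ?_
  split_ifs <;> simp

lemma TD_w {n : ℕ} (q : ℕ) (lam : Fin n → ℝ) (k : Fin n) : TD q lam (X (wV k)) = 0 := by
  rw [← Tder_eq, Tder]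
  apply Finset.sum_eq_zero
  intro j _
  split_ifs <;> rw [pderiv_X_of_ne (by simp [wV, zV, zbV]), mul_zero]
lemma TD_wb {n : ℕ} (q : ℕ) (lam : Fin n → ℝ) (k : Fin n) : TD q lam (X (wbV k)) = 0 := by
  rw [← Tder_eq, Tder]
  apply Finset.sum_eq_zero
  intro j _
  split_ifs <;> rw [pderiv_X_of_ne (by simp [wbV, zV, zbV]), mul_zero]
lemma TD_z {n : ℕ} (q : ℕ) (lam : Fin n → ℝ) (k : Fin n) (h : (k : ℕ) < q) :
    TD q lam (X (zV k)) = C (2 * Complex.I * ((|lam k| : ℝ) : ℂ)) * X (zV k) := by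
  rw [← Tder_eq, Tder, Finset.sum_eq_single k]
  · simp [h]
  · intro j _ hj
    split_ifs <;> rw [pderiv_X_of_ne (by simp [zV, zbV, hj.symm]), mul_zero]
  · simp
lemma TD_zb {n : ℕ} (q : ℕ) (lam : Fin n → ℝ) (k : Fin n) (h : q ≤ (k : ℕ)) :
    TD q lam (X (zbV k)) = C (2 * Complex.I * ((|lam k| : ℝ) : ℂ)) * X (zbV k) := by
  rw [← Tder_eq, Tder, Finset.sum_eq_single k]
  · simp [not_lt.2 h]
  · intro j _ hj
    split_ifs <;> rw [pderiv_X_of_ne (by simp [zV, zbV, hj.symm]), mul_zero]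
  · simp

lemma TD_C {n : ℕ} (q : ℕ) (lam : Fin n → ℝ) (a : ℂ) (p : MvPolynomial (Var n) ℂ) :
    TD q lam (C a * p) = C a * TD q lam p := by
  rw [← smul_eq_C_mul, Derivation.map_smul, smul_eq_C_mul]

lemma wA_e {n : ℕ} (q : ℕ) (lam : Fin n → ℝ) (k : Fin n) :
    wA q lam (eIdx k) = if q ≤ (k : ℕ) then |lam k| else 0 := by
  unfold wA
  rw [Finset.sum_eq_single k] <;> simp +contextual [eIdx]
lemma wB_e {n : ℕ} (q : ℕ) (lam : Fin n → ℝ) (k : Fin n) :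
    wB q lam (eIdx k) = if (k : ℕ) < q then |lam k| else 0 := by
  unfold wB
  rw [Finset.sum_eq_single k] <;> simp +contextual [eIdx]
lemma wA_0 {n : ℕ} (q : ℕ) (lam : Fin n → ℝ) : wA q lam 0 = 0 := by simp [wA]
lemma wB_0 {n : ℕ} (q : ℕ) (lam : Fin n → ℝ) : wB q lam 0 = 0 := by simp [wB]
lemma wA_add {n : ℕ} (q : ℕ) (lam : Fin n → ℝ) (f g : Fin n → ℕ) :
    wA q lam (fun t => f t + g t) = wA q lam f + wA q lam g := by
  unfold wA
  rw [← Finset.sum_add_distrib]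
  refine Finset.sum_congr rfl fun j _ => ?_
  split_ifs
  · push_cast; ring
  · simp
lemma wB_add {n : ℕ} (q : ℕ) (lam : Fin n → ℝ) (f g : Fin n → ℕ) :
    wB q lam (fun t => f t + g t) = wB q lam f + wB q lam g := by
  unfold wB
  rw [← Finset.sum_add_distrib]
  refine Finset.sum_congr rfl fun j _ => ?_
  split_ifs
  · push_cast; ring
  · simp

lemma sum_symm {n : ℕ} {M : Type*} [AddCommGroup M] [Module ℂ M] (L R : Fin n → Fin n → Fin n → M)
    (h : ∀ k j s, L k j s + L k s j = R k j s + R k s j) :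
    ∑ k, ∑ j, ∑ s, L k j s = ∑ k, ∑ j, ∑ s, R k j s := by
  refine Finset.sum_congr rfl fun k _ => ?_
  have e : ∀ F : Fin n → Fin n → Fin n → M, (2 : ℂ) • ∑ j, ∑ s, F k j s
      = ∑ j, ∑ s, (F k j s + F k s j) := by
    intro F
    rw [two_smul]
    conv_lhs => rw [Finset.sum_comm]
    rw [add_comm]
    conv_lhs => arg 2; rw [Finset.sum_comm]
    conv_lhs => arg 1; rw [Finset.sum_comm]
    simp only [Finset.sum_add_distrib]
    congr 1
    rw [Finset.sum_comm]
  have h2 : (2 : ℂ) • ∑ j, ∑ s, L k j s = (2 : ℂ) • ∑ j, ∑ s, R k j s := by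
    rw [e, e]
    simp only [h]
  have := congrArg (fun x => (2 : ℂ)⁻¹ • x) h2
  simpa [smul_smul] using this

/-- `T ψ₃² = Σ_{j≤q} 2i|λ_j| w_j ∂ψ₃¹/∂z_j + Σ_{j>q} 2i|λ_j| w̄_j ∂ψ₃¹/∂z̄_j`,
where `ψ₃¹` is described through its coefficients. -/
theorem statement4 (n q : ℕ) (hn : 1 ≤ n) (hq : q ≤ n) (lam : Fin n → ℝ)
    (hneg : ∀ j : Fin n, (j : ℕ) < q → lam j < 0)
    (hpos : ∀ j : Fin n, q ≤ (j : ℕ) → 0 < lam j)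
    (c : (Fin n → ℕ) → (Fin n → ℕ) → ℂ)
    (ψ₃₁ : MvPolynomial (Var n) ℂ)
    (hψ1a : ∀ (j : Fin n), (j : ℕ) < q → ∀ α β : Fin n → ℕ,
      (∑ t, α t) + (∑ t, β t) = 2 →
      coeff (mIdx α β 0 (eIdx j)) ψ₃₁ =
        if ¬ (∀ t : Fin n, q ≤ (t : ℕ) → α t = 0) then
          Complex.I * (c α (fun t => β t + eIdx j t) / ((factM α * factM β : ℕ) : ℂ)) *
            ((2 * |lam j| * wA q lam α /
              ((wA q lam α + wB q lam β) * (wA q lam α + wB q lam β + |lam j|)) : ℝ) : ℂ)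
        else 0)
    (hψ1b : ∀ (j : Fin n), q ≤ (j : ℕ) → ∀ α β : Fin n → ℕ,
      (∑ t, α t) + (∑ t, β t) = 2 →
      coeff (mIdx α β (eIdx j) 0) ψ₃₁ =
        if ¬ (∀ t : Fin n, (t : ℕ) < q → β t = 0) then
          - Complex.I * (c (fun t => α t + eIdx j t) β / ((factM α * factM β : ℕ) : ℂ)) *
            ((2 * |lam j| * wB q lam β /
              ((wA q lam α + wB q lam β) * (wA q lam α + wB q lam β + |lam j|)) : ℝ) : ℂ)
        else 0)
    (hψ1c : ∀ α β γ δ : Fin n → ℕ,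
      ¬ ((∑ t, α t) + (∑ t, β t) = 2 ∧
          ((∃ j : Fin n, (j : ℕ) < q ∧ γ = 0 ∧ δ = eIdx j) ∨
           (∃ j : Fin n, q ≤ (j : ℕ) ∧ δ = 0 ∧ γ = eIdx j))) →
      coeff (mIdx α β γ δ) ψ₃₁ = 0) :
    Tder q lam (psi32 q lam c) =
      ∑ j : Fin n,
        (if (j : ℕ) < q then
          C (2 * Complex.I * ((|lam j| : ℝ) : ℂ)) * X (wV j) * pderiv (zV j) ψ₃₁
        else
          C (2 * Complex.I * ((|lam j| : ℝ) : ℂ)) * X (wbV j) * pderiv (zbV j) ψ₃₁) := by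
  have hl : ∀ j, 0 < |lam j| := by
    intro j
    rw [abs_pos]
    rcases lt_or_ge (j : ℕ) q with h | h
    · exact (hneg j h).ne
    · exact (hpos j h).ne'
  have lt_ge : ∀ j : Fin n, (j : ℕ) < q → ¬ q ≤ (j : ℕ) := fun j h => not_le.2 h
  -- coefficient of zb_k in the z_s derivative
  have A1 : ∀ s k j : Fin n, (s : ℕ) < q → coeff (mIdx (eIdx k) 0 (gg q j) (dd q j)) (pderiv (zV s) ψ₃₁)
      = if (j : ℕ) < q then (if q ≤ (k : ℕ) then
          Complex.I * c (eIdx k) (fun t => eIdx s t + eIdx j t) *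
            ((2 * |lam j| * |lam k| / ((|lam k| + |lam s|) * (|lam k| + |lam s| + |lam j|)) : ℝ) : ℂ)
          else 0)
        else - Complex.I * c (fun t => eIdx k t + eIdx j t) (eIdx s) *
          ((2 * |lam j| * |lam s| / (((if q ≤ (k : ℕ) then |lam k| else 0) + |lam s|) *
            ((if q ≤ (k : ℕ) then |lam k| else 0) + |lam s| + |lam j|)) : ℝ) : ℂ) := by
    intro s k j hs
    rw [coeff_pd, mIdx_add_z, mIdx_z]
    have e : (fun t => (0 : Fin n → ℕ) t + eIdx s t) = eIdx s := by funext t; simp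
    rw [e]
    by_cases hj : (j : ℕ) < q
    · simp only [gg, dd, hj, if_true]
      rw [hψ1a j hj _ _ (by simp [sum_eIdx])]
      by_cases hk : q ≤ (k : ℕ)
      · rw [if_pos (by intro h; have := h k hk; simp [eIdx] at this)]
        simp [factM_e, wA_e, wB_e, hk, hs]
      · rw [if_neg]
        · simp [hk]
        · rw [not_not]
          intro t ht
          have : t ≠ k := by rintro rfl; exact hk ht
          simp [eIdx, this]
    · simp only [gg, dd, hj, if_false]
      rw [hψ1b j (not_lt.1 hj) _ _ (by simp [sum_eIdx])]
      rw [if_pos (by intro h; have := h s hs; simp [eIdx] at this)]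
      simp [factM_e, wA_e, wB_e, hs]
  have A2 : ∀ s k j : Fin n, (s : ℕ) < q → coeff (mIdx 0 (eIdx k) (gg q j) (dd q j)) (pderiv (zV s) ψ₃₁)
      = if (j : ℕ) < q then 0
        else - Complex.I * c (eIdx j) (fun t => eIdx k t + eIdx s t) *
          ((2 * |lam j| / ((if (k : ℕ) < q then |lam k| else 0) + |lam s| + |lam j|) : ℝ) : ℂ) := by
    intro s k j hs
    rw [coeff_pd, mIdx_add_z, mIdx_z]
    by_cases hj : (j : ℕ) < q
    · simp only [gg, dd, hj, if_true]
      rw [hψ1a j hj _ _ (by simp [sum_eIdx, Finset.sum_add_distrib])]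
      simp
    · simp only [gg, dd, hj, if_false]
      rw [hψ1b j (not_lt.1 hj) _ _ (by simp [sum_eIdx, Finset.sum_add_distrib])]
      rw [if_pos (by intro h; have := h s hs; simp [eIdx] at this)]
      have e : (fun t => (0 : Fin n → ℕ) t + eIdx j t) = eIdx j := by funext t; simp
      rw [e, factM_0, factM_ee, wA_0, wB_add, wB_e, wB_e, if_pos hs]
      have hx : (if (k : ℕ) < q then |lam k| else 0) + |lam s| ≠ 0 := by
        have := hl s; have := hl k; split_ifs <;> positivity
      have hy : (if (k : ℕ) < q then |lam k| else 0) + |lam s| + |lam j| ≠ 0 := by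
        have := hl s; have := hl k; have := hl j; split_ifs <;> positivity
      generalize (if (k : ℕ) < q then |lam k| else 0) + |lam s| = x at *
      have hz : (eIdx k s : ℂ) + 1 ≠ 0 := by
        exact_mod_cast Nat.succ_ne_zero (eIdx k s)
      have : 2 * |lam j| * x / ((0 + x) * (0 + x + |lam j|)) = 2 * |lam j| / (x + |lam j|) := by
        rw [zero_add]; field_simp
      rw [this]
      push_cast
      field_simp
  have B1 : ∀ s k j : Fin n, q ≤ (s : ℕ) → coeff (mIdx 0 (eIdx k) (gg q j) (dd q j)) (pderiv (zbV s) ψ₃₁)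
      = if (j : ℕ) < q then Complex.I * c (eIdx s) (fun t => eIdx k t + eIdx j t) *
          ((2 * |lam j| * |lam s| / ((|lam s| + (if (k : ℕ) < q then |lam k| else 0)) *
            (|lam s| + (if (k : ℕ) < q then |lam k| else 0) + |lam j|)) : ℝ) : ℂ)
        else (if (k : ℕ) < q then
          - Complex.I * c (fun t => eIdx s t + eIdx j t) (eIdx k) *
            ((2 * |lam j| * |lam k| / ((|lam s| + |lam k|) * (|lam s| + |lam k| + |lam j|)) : ℝ) : ℂ)
          else 0) := by
    intro s k j hs
    rw [coeff_pd, mIdx_add_zb, mIdx_zb]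
    have e : (fun t => (0 : Fin n → ℕ) t + eIdx s t) = eIdx s := by funext t; simp
    rw [e]
    by_cases hj : (j : ℕ) < q
    · simp only [gg, dd, hj, if_true]
      rw [hψ1a j hj _ _ (by simp [sum_eIdx])]
      rw [if_pos (by intro h; have := h s hs; simp [eIdx] at this)]
      simp [factM_e, wA_e, wB_e, hs]
    · simp only [gg, dd, hj, if_false]
      rw [hψ1b j (not_lt.1 hj) _ _ (by simp [sum_eIdx])]
      by_cases hk : (k : ℕ) < q
      · rw [if_pos (by intro h; have := h k hk; simp [eIdx] at this)]
        simp [factM_e, wA_e, wB_e, hk, hs]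
      · rw [if_neg]
        · simp [hk]
        · rw [not_not]
          intro t ht
          have : t ≠ k := by rintro rfl; exact hk ht
          simp [eIdx, this]
  have B2 : ∀ s k j : Fin n, q ≤ (s : ℕ) → coeff (mIdx (eIdx k) 0 (gg q j) (dd q j)) (pderiv (zbV s) ψ₃₁)
      = if (j : ℕ) < q then Complex.I * c (fun t => eIdx k t + eIdx s t) (eIdx j) *
          ((2 * |lam j| / ((if q ≤ (k : ℕ) then |lam k| else 0) + |lam s| + |lam j|) : ℝ) : ℂ)
        else 0 := by
    intro s k j hs
    rw [coeff_pd, mIdx_add_zb, mIdx_zb]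
    by_cases hj : (j : ℕ) < q
    · simp only [gg, dd, hj, if_true]
      rw [hψ1a j hj _ _ (by simp [sum_eIdx, Finset.sum_add_distrib])]
      rw [if_pos (by intro h; have := h s hs; simp [eIdx] at this)]
      have e : (fun t => (0 : Fin n → ℕ) t + eIdx j t) = eIdx j := by funext t; simp
      rw [e, factM_0, factM_ee, wB_0, wA_add, wA_e, wA_e, if_pos hs]
      have hx : (if q ≤ (k : ℕ) then |lam k| else 0) + |lam s| ≠ 0 := by
        have := hl s; have := hl k; split_ifs <;> positivity
      have hy : (if q ≤ (k : ℕ) then |lam k| else 0) + |lam s| + |lam j| ≠ 0 := by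
        have := hl s; have := hl k; have := hl j; split_ifs <;> positivity
      generalize (if q ≤ (k : ℕ) then |lam k| else 0) + |lam s| = x at *
      have hz : (eIdx k s : ℂ) + 1 ≠ 0 := by
        exact_mod_cast Nat.succ_ne_zero (eIdx k s)
      have : 2 * |lam j| * x / ((x + 0) * (x + 0 + |lam j|)) = 2 * |lam j| / (x + |lam j|) := by
        rw [add_zero]; field_simp
      rw [this]
      push_cast
      field_simp
    · simp only [gg, dd, hj, if_false]
      rw [hψ1b j (not_lt.1 hj) _ _ (by simp [sum_eIdx, Finset.sum_add_distrib])]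
      simp
  have hR : (∑ j : Fin n,
        (if (j : ℕ) < q then
          C (2 * Complex.I * ((|lam j| : ℝ) : ℂ)) * X (wV j) * pderiv (zV j) ψ₃₁
        else
          C (2 * Complex.I * ((|lam j| : ℝ) : ℂ)) * X (wbV j) * pderiv (zbV j) ψ₃₁))
      = ∑ k : Fin n, ∑ j : Fin n, ∑ s : Fin n,
        if (s : ℕ) < q then
          C (2 * Complex.I * ((|lam s| : ℝ) : ℂ)) * X (wV s) *
          (C (coeff (mIdx 0 (eIdx k) (gg q j) (dd q j)) (pderiv (zV s) ψ₃₁)) * (X (zV k) * X (WW q j))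
          + C (coeff (mIdx (eIdx k) 0 (gg q j) (dd q j)) (pderiv (zV s) ψ₃₁)) *
            (X (zbV k) * X (WW q j)))
        else
          C (2 * Complex.I * ((|lam s| : ℝ) : ℂ)) * X (wbV s) *
          (C (coeff (mIdx 0 (eIdx k) (gg q j) (dd q j)) (pderiv (zbV s) ψ₃₁)) * (X (zV k) * X (WW q j))
          + C (coeff (mIdx (eIdx k) 0 (gg q j) (dd q j)) (pderiv (zbV s) ψ₃₁)) *
            (X (zbV k) * X (WW q j))) := by
    have : ∀ F : Fin n → Fin n → Fin n → MvPolynomial (Var n) ℂ,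
        ∑ k, ∑ j, ∑ s, F k j s = ∑ s, ∑ k, ∑ j, F k j s := by
      intro F
      rw [Finset.sum_comm (s := (Finset.univ : Finset (Fin n))) (f := fun s k => ∑ j, F k j s)]
      refine Finset.sum_congr rfl fun k _ => ?_
      rw [Finset.sum_comm]
    rw [this]
    refine Finset.sum_congr rfl fun s _ => ?_
    by_cases hs : (s : ℕ) < q
    · simp only [hs, if_true, ← Finset.mul_sum]
      rw [← expand q _ (supp_z ψ₃₁ hψ1c s)]
    · simp only [hs, if_false, ← Finset.mul_sum]
      rw [← expand q _ (supp_zb ψ₃₁ hψ1c s)]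
  have hL : Tder q lam (psi32 q lam c) = ∑ k : Fin n, ∑ j : Fin n, ∑ s : Fin n,
      ((if q ≤ (k : ℕ) ∧ (j : ℕ) < q ∧ (s : ℕ) < q then
        C Complex.I * (C (c (eIdx k) (fun t => eIdx j t + eIdx s t)) *
        C (((|lam j| * |lam s| / (|lam k| + |lam j| + |lam s|)) *
            (1 / (|lam j| + |lam k|) + 1 / (|lam k| + |lam s|)) : ℝ) : ℂ) *
        (C (2 * Complex.I * ((|lam k| : ℝ) : ℂ)) * (X (zbV k) * X (wV j) * X (wV s))))
      else 0)
      - (if (k : ℕ) < q ∧ q ≤ (j : ℕ) ∧ q ≤ (s : ℕ) then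
        C Complex.I * (C (c (fun t => eIdx j t + eIdx s t) (eIdx k)) *
        C (((|lam j| * |lam s| / (|lam k| + |lam j| + |lam s|)) *
            (1 / (|lam j| + |lam k|) + 1 / (|lam k| + |lam s|)) : ℝ) : ℂ) *
        (C (2 * Complex.I * ((|lam k| : ℝ) : ℂ)) * (X (zV k) * X (wbV j) * X (wbV s))))
      else 0)
      + (if q ≤ (k : ℕ) ∧ q ≤ (j : ℕ) ∧ (s : ℕ) < q then
        C Complex.I * (C (c (fun t => eIdx k t + eIdx j t) (eIdx s)) *
        C ((2 * |lam s| * |lam j| /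
            ((|lam k| + |lam s|) * (|lam k| + |lam s| + |lam j|)) : ℝ) : ℂ) *
        (C (2 * Complex.I * ((|lam k| : ℝ) : ℂ)) * (X (zbV k) * X (wbV j) * X (wV s))))
      else 0)
      - (if q ≤ (j : ℕ) ∧ (s : ℕ) < q ∧ (k : ℕ) < q then
        C Complex.I * (C (c (eIdx j) (fun t => eIdx k t + eIdx s t)) *
        C ((2 * |lam s| * |lam j| /
            ((|lam k| + |lam j|) * (|lam k| + |lam s| + |lam j|)) : ℝ) : ℂ) *
        (C (2 * Complex.I * ((|lam k| : ℝ) : ℂ)) * (X (zV k) * X (wbV j) * X (wV s))))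
      else 0)) := by
    rw [Tder_eq, psi32, map_sub, map_add, map_sub, TD_C, TD_C, TD_C, TD_C]
    simp only [Finset.sum_add_distrib, Finset.sum_sub_distrib]
    congr 1
    · congr 1
      · congr 1
        · rw [map_sum, Finset.mul_sum]
          refine Finset.sum_congr rfl fun k _ => ?_
          rw [map_sum, Finset.mul_sum]
          refine Finset.sum_congr rfl fun j _ => ?_
          rw [map_sum, Finset.mul_sum]
          refine Finset.sum_congr rfl fun s _ => ?_
          split_ifs with h
          · rw [← C_mul, TD_C, Derivation.leibniz, Derivation.leibniz, TD_w, TD_w, TD_zb _ _ _ h.1]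
            simp only [smul_eq_mul]
            ring
          · simp
        · rw [map_sum, Finset.mul_sum]
          refine Finset.sum_congr rfl fun k _ => ?_
          rw [map_sum, Finset.mul_sum]
          refine Finset.sum_congr rfl fun j _ => ?_
          rw [map_sum, Finset.mul_sum]
          refine Finset.sum_congr rfl fun s _ => ?_
          split_ifs with h
          · rw [← C_mul, TD_C, Derivation.leibniz, Derivation.leibniz, TD_wb, TD_wb, TD_z _ _ _ h.1]
            simp only [smul_eq_mul]
            ring
          · simp
      · rw [map_sum, Finset.mul_sum]
        refine Finset.sum_congr rfl fun k _ => ?_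
        rw [map_sum, Finset.mul_sum]
        refine Finset.sum_congr rfl fun j _ => ?_
        rw [map_sum, Finset.mul_sum]
        refine Finset.sum_congr rfl fun s _ => ?_
        split_ifs with h
        · rw [← C_mul, TD_C, Derivation.leibniz, Derivation.leibniz, TD_w, TD_wb, TD_zb _ _ _ h.1]
          simp only [smul_eq_mul]
          ring
        · simp
    · have : ∀ F : Fin n → Fin n → Fin n → MvPolynomial (Var n) ℂ,
          ∑ k, ∑ j, ∑ s, F k j s = ∑ s, ∑ k, ∑ j, F k j s := by
        intro F
        rw [Finset.sum_comm (s := (Finset.univ : Finset (Fin n))) (f := fun s k => ∑ j, F k j s)]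
        refine Finset.sum_congr rfl fun k _ => ?_
        rw [Finset.sum_comm]
      conv_lhs => rw [this]
      rw [map_sum, Finset.mul_sum]
      refine Finset.sum_congr rfl fun k _ => ?_
      rw [map_sum, Finset.mul_sum]
      refine Finset.sum_congr rfl fun j _ => ?_
      rw [map_sum, Finset.mul_sum]
      refine Finset.sum_congr rfl fun s _ => ?_
      split_ifs with h
      · rw [← C_mul, TD_C, Derivation.leibniz, Derivation.leibniz, TD_w, TD_wb, TD_z _ _ _ h.2.2]
        simp only [smul_eq_mul]
        ring
      · simp
  rw [hL, hR]
  clear hL hR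
  apply sum_symm
  intro k j s
  have hlk := hl k
  have hlj := hl j
  have hls := hl s
  have ec : ∀ a b : Fin n, (fun t => eIdx a t + eIdx b t) = (fun t => eIdx b t + eIdx a t) := by
    intro a b; funext t; rw [add_comm]
  let D : ℝ →+* MvPolynomial (Var n) ℂ := C.comp Complex.ofRealHom
  have hD : ∀ r : ℝ, (C ((r : ℝ) : ℂ) : MvPolynomial (Var n) ℂ) = D r := fun _ => rfl
  by_cases hj : (j : ℕ) < q <;> by_cases hs : (s : ℕ) < q <;> by_cases hk : (k : ℕ) < q <;>
    [have hj' := not_le.2 hj; have hj' := not_le.2 hj; have hj' := not_le.2 hj;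
     have hj' := not_le.2 hj; have hj' := not_lt.1 hj; have hj' := not_lt.1 hj;
     have hj' := not_lt.1 hj; have hj' := not_lt.1 hj] <;>
    [have hs' := not_le.2 hs; have hs' := not_le.2 hs; have hs' := not_lt.1 hs;
     have hs' := not_lt.1 hs; have hs' := not_le.2 hs; have hs' := not_le.2 hs;
     have hs' := not_lt.1 hs; have hs' := not_lt.1 hs] <;>
    [have hk' := not_le.2 hk; have hk' := not_lt.1 hk; have hk' := not_le.2 hk;
     have hk' := not_lt.1 hk; have hk' := not_le.2 hk; have hk' := not_lt.1 hk;
     have hk' := not_le.2 hk; have hk' := not_lt.1 hk] <;>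
    simp only [hj, hs, hk, hj', hs', hk', if_true, if_false, and_self, and_true, true_and,
      and_false, false_and, A1, A2, B1, B2, WW, map_zero, zero_mul, mul_zero, add_zero,
      zero_add, sub_zero, zero_sub, not_false_eq_true, C_mul, C_neg, hD] <;>
    try simp only [ec s j, ec s k, ec j k]
  · have h : D (|lam j| * |lam s| / (|lam k| + |lam j| + |lam s|) * (1 / (|lam j| + |lam k|) + 1 / (|lam k| + |lam s|))) * D (|lam k|) + D (|lam s| * |lam j| / (|lam k| + |lam s| + |lam j|) * (1 / (|lam s| + |lam k|) + 1 / (|lam k| + |lam j|))) * D (|lam k|) = D (|lam s|) * D (2 * |lam j| * |lam k| / ((|lam k| + |lam s|) * (|lam k| + |lam s| + |lam j|))) + D (|lam j|) * D (2 * |lam s| * |lam k| / ((|lam k| + |lam j|) * (|lam k| + |lam j| + |lam s|))) := by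
      simp only [← map_mul, ← map_add, ← map_sub]
      congr 1
      field_simp
      try ring
    linear_combination (C Complex.I * C (c (eIdx k) (fun t => eIdx j t + eIdx s t)) * C 2 * C Complex.I * X (zbV k) * X (wV j) * X (wV s)) * h
  · have h1 : D (2 * |lam j| * |lam s| / ((|lam k| + |lam s|) * (|lam k| + |lam j| + |lam s|))) * D (|lam k|) = D (|lam j|) * D (2 * |lam s| / (|lam k| + |lam j| + |lam s|)) - D (|lam s|) * D (2 * |lam j| * |lam s| / ((|lam s| + |lam k|) * (|lam s| + |lam k| + |lam j|))) := by
      simp only [← map_mul, ← map_add, ← map_sub]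
      congr 1
      field_simp
      try ring
    have h2 : D (|lam s|) * D (2 * |lam j| / (|lam s| + |lam j|)) = D (|lam j|) * D (2 * |lam s| * |lam j| / (|lam j| * (|lam j| + |lam s|))) := by
      simp only [← map_mul, ← map_add, ← map_sub]
      congr 1
      field_simp
      try ring
    linear_combination (-(C Complex.I * C (c (eIdx s) (fun t => eIdx k t + eIdx j t)) * C 2 * C Complex.I * X (zV k) * X (wbV s) * X (wV j))) * h1 + (-(C Complex.I * C (c (fun t => eIdx k t + eIdx s t) (eIdx j)) * C 2 * C Complex.I * X (zbV k) * X (wbV s) * X (wV j))) * h2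
  · have h1 : D (|lam s|) * D (2 * |lam j| * |lam s| / (|lam s| * (|lam s| + |lam j|))) = D (|lam j|) * D (2 * |lam s| / (|lam j| + |lam s|)) := by
      simp only [← map_mul, ← map_add, ← map_sub]
      congr 1
      field_simp
      try ring
    have h2 : D (2 * |lam j| * |lam s| / ((|lam k| + |lam j|) * (|lam k| + |lam j| + |lam s|))) * D (|lam k|) = D (|lam s|) * D (2 * |lam j| / (|lam k| + |lam s| + |lam j|)) - D (|lam j|) * D (2 * |lam s| * |lam j| / ((|lam k| + |lam j|) * (|lam k| + |lam j| + |lam s|))) := by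
      simp only [← map_mul, ← map_add, ← map_sub]
      congr 1
      field_simp
      try ring
    linear_combination (-(C Complex.I * C (c (eIdx s) (fun t => eIdx k t + eIdx j t)) * C 2 * C Complex.I * X (zV k) * X (wbV s) * X (wV j))) * h1 + ((C Complex.I * C (c (fun t => eIdx k t + eIdx s t) (eIdx j)) * C 2 * C Complex.I * X (zbV k) * X (wbV s) * X (wV j))) * h2
  · have h1 : D (2 * |lam s| * |lam j| / ((|lam k| + |lam j|) * (|lam k| + |lam s| + |lam j|))) * D (|lam k|) = D (|lam s|) * D (2 * |lam j| / (|lam k| + |lam s| + |lam j|)) - D (|lam j|) * D (2 * |lam s| * |lam j| / ((|lam j| + |lam k|) * (|lam j| + |lam k| + |lam s|))) := by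
      simp only [← map_mul, ← map_add, ← map_sub]
      congr 1
      field_simp
      try ring
    have h2 : D (|lam j|) * D (2 * |lam s| / (|lam j| + |lam s|)) = D (|lam s|) * D (2 * |lam j| * |lam s| / (|lam s| * (|lam s| + |lam j|))) := by
      simp only [← map_mul, ← map_add, ← map_sub]
      congr 1
      field_simp
      try ring
    linear_combination (-(C Complex.I * C (c (eIdx j) (fun t => eIdx k t + eIdx s t)) * C 2 * C Complex.I * X (zV k) * X (wbV j) * X (wV s))) * h1 + (-(C Complex.I * C (c (fun t => eIdx k t + eIdx j t) (eIdx s)) * C 2 * C Complex.I * X (zbV k) * X (wbV j) * X (wV s))) * h2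
  · have h1 : D (|lam j|) * D (2 * |lam s| * |lam j| / (|lam j| * (|lam j| + |lam s|))) = D (|lam s|) * D (2 * |lam j| / (|lam s| + |lam j|)) := by
      simp only [← map_mul, ← map_add, ← map_sub]
      congr 1
      field_simp
      try ring
    have h2 : D (2 * |lam s| * |lam j| / ((|lam k| + |lam s|) * (|lam k| + |lam s| + |lam j|))) * D (|lam k|) = D (|lam j|) * D (2 * |lam s| / (|lam k| + |lam j| + |lam s|)) - D (|lam s|) * D (2 * |lam j| * |lam s| / ((|lam k| + |lam s|) * (|lam k| + |lam s| + |lam j|))) := by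
      simp only [← map_mul, ← map_add, ← map_sub]
      congr 1
      field_simp
      try ring
    linear_combination (-(C Complex.I * C (c (eIdx j) (fun t => eIdx k t + eIdx s t)) * C 2 * C Complex.I * X (zV k) * X (wbV j) * X (wV s))) * h1 + ((C Complex.I * C (c (fun t => eIdx k t + eIdx j t) (eIdx s)) * C 2 * C Complex.I * X (zbV k) * X (wbV j) * X (wV s))) * h2
  · have h : D (|lam j| * |lam s| / (|lam k| + |lam j| + |lam s|) * (1 / (|lam j| + |lam k|) + 1 / (|lam k| + |lam s|))) * D (|lam k|) + D (|lam s| * |lam j| / (|lam k| + |lam s| + |lam j|) * (1 / (|lam s| + |lam k|) + 1 / (|lam k| + |lam j|))) * D (|lam k|) = D (|lam s|) * D (2 * |lam j| * |lam k| / ((|lam s| + |lam k|) * (|lam s| + |lam k| + |lam j|))) + D (|lam j|) * D (2 * |lam s| * |lam k| / ((|lam j| + |lam k|) * (|lam j| + |lam k| + |lam s|))) := by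
      simp only [← map_mul, ← map_add, ← map_sub]
      congr 1
      field_simp
      try ring
    linear_combination (-C Complex.I * C (c (fun t => eIdx j t + eIdx s t) (eIdx k)) * C 2 * C Complex.I * X (zV k) * X (wbV j) * X (wbV s)) * h
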